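/- Let H be a complex Hilbert space, S ⊆ H a dense subspace, and d, δ : S → H linear maps with d(S) ⊆ S, d(d x) = 0 for all x ∈ S, and ⟪d x, y⟫ = ⟪x, δ y⟫ for all x, y ∈ S. Assume ‖x‖² ≤ ‖d x‖² + ‖δ x‖² for all x ∈ S, and that P := d + δ (with domain S) is essentially self-adjoint. Then every closed element is exact with a coclosed primitive: for every α ∈ H with ⟪α, δ y⟫ = 0 for all y ∈ S, there exists γ ∈ dom(d_min) such that d_min γ = α and ⟪γ, d y⟫ = 0 for all y ∈ S. -/

import Mathlib

/-!
Formal adjointness and `d ∘ d = 0` make the ranges of `d` and `δ` orthogonal, so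
`‖P x‖² = ‖d x‖² + ‖δ x‖² ≥ ‖x‖²` on `S` for `P = d + δ`
(`norm_sq_add_of_complex`, `inner_d_delta_eq_zero`).

If `w` is orthogonal to the range of `P`, then `w` lies in the domain of `P*` with `P* w = 0`, hence
by essential self-adjointness `P̄ w = 0`, and the lower bound forces `w = 0`. So the range
of `P` is dense (`dense_range_of_essSelfAdjoint`).

Given a closed `α`, take `v n ∈ S` with `P (v n) → α`. By the norm identity `v n`, `d (v n)` and
`δ (v n)` are Cauchy; call the limits `γ`, `β`, `η`, so that `α = β + η`. Both `α` and `β` are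
orthogonal to the range of `δ`, while `η` is in its closure: hence `η = 0`, so `d_min γ = α`, and
`⟪γ, d y⟫ = lim ⟪δ (v n), y⟫ = 0`.
-/

open scoped ComplexInnerProductSpace
open Filter

/-- `(x, y)` belongs to the graph of the minimal (closed) extension of `T` : there is a
sequence in `S` converging to `x` whose image under `T` converges to `y`. -/
def InMinGraph {H : Type*} [NormedAddCommGroup H] [InnerProductSpace ℂ H]
    (S : Submodule ℂ H) (T : S →ₗ[ℂ] H) (x y : H) : Prop :=
  ∃ u : ℕ → S, Tendsto (fun n => (u n : H)) atTop (nhds x) ∧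
    Tendsto (fun n => T (u n)) atTop (nhds y)

/-- `x` belongs to the domain of the adjoint `T*` : the functional
`y ↦ ⟪x, T y⟫` is bounded on `S`. -/
def InAdjointDomain {H : Type*} [NormedAddCommGroup H] [InnerProductSpace ℂ H]
    (S : Submodule ℂ H) (T : S →ₗ[ℂ] H) (x : H) : Prop :=
  ∃ C : ℝ, ∀ y : S, ‖⟪x, T y⟫‖ ≤ C * ‖(y : H)‖

section Helpers

variable {H : Type*} [NormedAddCommGroup H] [InnerProductSpace ℂ H]

theorem inner_d_delta_eq_zero (S : Submodule ℂ H) (d δ : S →ₗ[ℂ] H)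
    (hdS : ∀ x : S, d x ∈ S) (hdd : ∀ x : S, d ⟨d x, hdS x⟩ = 0)
    (hadj : ∀ x y : S, ⟪d x, (y : H)⟫ = ⟪(x : H), δ y⟫) (x y : S) :
    ⟪d x, δ y⟫ = 0 := by
  have h := hadj ⟨d x, hdS x⟩ y
  rw [hdd, inner_zero_left] at h
  exact h.symm

theorem norm_sq_add_of_complex (S : Submodule ℂ H) (d δ : S →ₗ[ℂ] H)
    (hdS : ∀ x : S, d x ∈ S) (hdd : ∀ x : S, d ⟨d x, hdS x⟩ = 0)
    (hadj : ∀ x y : S, ⟪d x, (y : H)⟫ = ⟪(x : H), δ y⟫) (x : S) :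
    ‖(d + δ) x‖ ^ 2 = ‖d x‖ ^ 2 + ‖δ x‖ ^ 2 := by
  have h := norm_add_sq_eq_norm_sq_add_norm_sq_of_inner_eq_zero (𝕜 := ℂ) (d x) (δ x)
    (inner_d_delta_eq_zero S d δ hdS hdd hadj x x)
  simpa [sq] using h

theorem formal_adjoint_swap (S : Submodule ℂ H) (d δ : S →ₗ[ℂ] H)
    (hadj : ∀ x y : S, ⟪d x, (y : H)⟫ = ⟪(x : H), δ y⟫) (x y : S) :
    ⟪δ x, (y : H)⟫ = ⟪(x : H), d y⟫ := by
  rw [← inner_conj_symm, ← hadj y x, inner_conj_symm]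

/-- A symmetric, essentially self-adjoint operator bounded below by `1` has dense range. -/
theorem dense_range_of_essSelfAdjoint [CompleteSpace H]
    (S : Submodule ℂ H) (hS : Dense (S : Set H)) (P : S →ₗ[ℂ] H)
    (hsymm : ∀ x y : S, ⟪P x, (y : H)⟫ = ⟪(x : H), P y⟫)
    (hbelow : ∀ x : S, ‖(x : H)‖ ≤ ‖P x‖)
    (hesa : ∀ x : H, InAdjointDomain S P x → ∃ y : H, InMinGraph S P x y) :
    Dense (Set.range P) := by
  have hbot : (LinearMap.range P)ᗮ = ⊥ := by
    rw [Submodule.eq_bot_iff]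
    intro w hw
    have hw0 : ∀ y : S, ⟪w, P y⟫ = 0 := fun y =>
      (Submodule.mem_orthogonal' _ _).1 hw _ ⟨y, rfl⟩
    obtain ⟨y, u, hu, hPu⟩ := hesa w ⟨0, fun y => by simp [hw0 y]⟩
    have hy : y = 0 := by
      refine hS.eq_zero_of_inner_left ℂ fun z' hz' => ?_
      let z : S := ⟨z', hz'⟩
      change ⟪y, (z : H)⟫ = 0
      have h1 : Tendsto (fun n => ⟪P (u n), (z : H)⟫) atTop (nhds ⟪y, (z : H)⟫) :=
        hPu.inner tendsto_const_nhds
      have h2 : Tendsto (fun n => ⟪(u n : H), P z⟫) atTop (nhds ⟪w, P z⟫) :=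
        hu.inner tendsto_const_nhds
      simp only [hsymm] at h1
      rw [tendsto_nhds_unique h1 h2, hw0]
    subst hy
    have h0 : Tendsto (fun n => (u n : H)) atTop (nhds 0) :=
      squeeze_zero_norm (fun n => hbelow (u n)) (by simpa using hPu.norm)
    exact tendsto_nhds_unique hu h0
  have htop := Submodule.topologicalClosure_eq_top_iff.2 hbot
  have := Submodule.dense_iff_topologicalClosure_eq_top.2 htop
  rwa [LinearMap.coe_range] at this

theorem exists_tendsto_of_norm_le [CompleteSpace H]
    (S : Submodule ℂ H) (A P : S →ₗ[ℂ] H) (hle : ∀ x : S, ‖A x‖ ≤ ‖P x‖)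
    (v : ℕ → S) (a : H) (hv : Tendsto (fun n => P (v n)) atTop (nhds a)) :
    ∃ b : H, Tendsto (fun n => A (v n)) atTop (nhds b) := by
  apply cauchySeq_tendsto_of_complete
  have hc := hv.cauchySeq
  rw [Metric.cauchySeq_iff] at hc ⊢
  intro ε hε
  obtain ⟨N, hN⟩ := hc ε hε
  refine ⟨N, fun m hm n hn => lt_of_le_of_lt ?_ (hN m hm n hn)⟩
  rw [dist_eq_norm, dist_eq_norm, ← map_sub, ← map_sub]
  exact hle _

end Helpers

/-- Abstract vanishing of `L²` cohomology : if `d, δ` are formally adjoint, `d² = 0`,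
the Weitzenböck-type inequality `‖x‖² ≤ ‖d x‖² + ‖δ x‖²` holds on `S`, and
`P = d + δ` is essentially self-adjoint, then every closed element is exact with a
coclosed primitive. -/
theorem closed_is_exact_with_coclosed_primitive
    {H : Type*} [NormedAddCommGroup H] [InnerProductSpace ℂ H] [CompleteSpace H]
    (S : Submodule ℂ H) (hS : Dense (S : Set H))
    (d δ : S →ₗ[ℂ] H)
    (hdS : ∀ x : S, d x ∈ S)
    (hdd : ∀ x : S, d ⟨d x, hdS x⟩ = 0)
    (hadj : ∀ x y : S, ⟪d x, (y : H)⟫ = ⟪(x : H), δ y⟫)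
    (hineq : ∀ x : S, ‖(x : H)‖ ^ 2 ≤ ‖d x‖ ^ 2 + ‖δ x‖ ^ 2)
    (hesa : ∀ x : H, InAdjointDomain S (d + δ) x →
      ∃ y : H, InMinGraph S (d + δ) x y) :
    ∀ α : H, (∀ y : S, ⟪α, δ y⟫ = 0) →
      ∃ γ : H, InMinGraph S d γ α ∧ ∀ y : S, ⟪γ, d y⟫ = 0 := by
  intro α hα
  have hnorm := norm_sq_add_of_complex S d δ hdS hdd hadj
  have hsymm : ∀ x y : S, ⟪(d + δ) x, (y : H)⟫ = ⟪(x : H), (d + δ) y⟫ := fun x y => by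
    simp only [LinearMap.add_apply, inner_add_left, inner_add_right, hadj x y,
      formal_adjoint_swap S d δ hadj x y, add_comm]
  have hbelow : ∀ x : S, ‖(x : H)‖ ≤ ‖(d + δ) x‖ := fun x =>
    (sq_le_sq₀ (norm_nonneg _) (norm_nonneg _)).1 ((hineq x).trans_eq (hnorm x).symm)
  have hd : ∀ x : S, ‖d x‖ ≤ ‖(d + δ) x‖ := fun x =>
    (sq_le_sq₀ (norm_nonneg _) (norm_nonneg _)).1 (by rw [hnorm]; linarith [sq_nonneg ‖δ x‖])
  have hdense := dense_range_of_essSelfAdjoint S hS (d + δ) hsymm hbelow hesa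
  obtain ⟨p, hp, hpα⟩ := mem_closure_iff_seq_limit.1 (hdense α)
  choose v hv using hp
  have hPv : Tendsto (fun n => (d + δ) (v n)) atTop (nhds α) := by
    simpa only [hv] using hpα
  obtain ⟨γ, hγ⟩ := exists_tendsto_of_norm_le S S.subtype (d + δ) hbelow v α hPv
  obtain ⟨β, hβ⟩ := exists_tendsto_of_norm_le S d (d + δ) hd v α hPv
  have hη : Tendsto (fun n => δ (v n)) atTop (nhds (α - β)) := by
    simpa using hPv.sub hβ
  have hη0 : ∀ y : S, ⟪α - β, δ y⟫ = 0 := fun y => by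
    have h1 : Tendsto (fun n => ⟪d (v n), δ y⟫) atTop (nhds ⟪β, δ y⟫) :=
      hβ.inner tendsto_const_nhds
    simp only [inner_d_delta_eq_zero S d δ hdS hdd hadj] at h1
    rw [inner_sub_left, hα, ← tendsto_nhds_unique tendsto_const_nhds h1, sub_zero]
  have hαβ : α - β = 0 := by
    -- `α - β` is orthogonal to the range of `δ` and also a limit of elements of that range.
    have h1 : Tendsto (fun n => ⟪α - β, δ (v n)⟫) atTop (nhds ⟪α - β, α - β⟫) :=
      tendsto_const_nhds.inner hη
    simp only [hη0] at h1
    exact inner_self_eq_zero.1 (tendsto_nhds_unique h1 tendsto_const_nhds)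
  refine ⟨γ, ⟨v, hγ, ?_⟩, fun y => ?_⟩
  · rwa [sub_eq_zero.1 hαβ]
  · have h1 : Tendsto (fun n => ⟪(v n : H), d y⟫) atTop (nhds ⟪γ, d y⟫) :=
      hγ.inner tendsto_const_nhds
    have h2 : Tendsto (fun n => ⟪δ (v n), (y : H)⟫) atTop (nhds ⟪α - β, (y : H)⟫) :=
      hη.inner tendsto_const_nhds
    simp only [formal_adjoint_swap S d δ hadj] at h2
    rw [tendsto_nhds_unique h1 h2, hαβ, inner_zero_left]
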